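/- Let τ, α, ν > 0 and let d ≥ 1 be an integer. Then S_{m,d}(τ,α,ν) ~ (Γ(d/2+ν)/(2√π)) · 2^{m+d+ν} / m^{(d−1)/2 + ν} as m → ∞. -/

import Mathlib

/-!
By duplication of the Pochhammer symbols, the `j`-th term of `Smd τ α ν d m` is
`(α+m)_{2j} (τ+m)_{2j} / ((α+ν+τ+m)_{2j} 4^j (m+(d+1)/2)_j j!)`. Put
`Q(n) = Γ(n+α) Γ(n+τ) / (Γ(n+α+ν+τ) Γ(n-ν))`, which tends to `1` because `Γ(n+s) ~ Γ(n) n^s`.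
The term equals `Q(m+2j) / Q(m)` times the `j`-th term of
`₂F₁((m-ν)/2, (m-ν+1)/2; m+(d+1)/2; 1)`. Every index `m+2j` is at least `m`, so `Q(m+2j)` is
close to `1` uniformly in `j`, and `Smd` is asymptotic to this `₂F₁(1)`
(`tendsto_weighted_tsum`, `Smd_eq`).

Gauss's summation theorem (`hasSum_gauss`, proved from the Beta integral and the binomial series)
and the duplication formula for `Γ` evaluate the `₂F₁(1)` as
`Γ(m+(d+1)/2) Γ(d/2+ν) 2^(m+ν+d-1) / (Γ(m+ν+d) √π)` (`hasSum_gaussTerm`), and one more use of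
`Γ(m+s) ~ Γ(m) m^s` gives the claim.
-/

open scoped Real BigOperators
open Filter

/-- The rising factorial (Pochhammer symbol) `(x)_j = x(x+1)⋯(x+j-1)`. -/
noncomputable def poch (x : ℝ) (j : ℕ) : ℝ := ∏ i ∈ Finset.range j, (x + i)

/-- The `₄F₃(1)` series `S_{m,d}(τ,α,ν)`. -/
noncomputable def Smd (τ α ν : ℝ) (d m : ℕ) : ℝ :=
  ∑' j : ℕ,
    poch ((α + m) / 2) j * poch ((α + m + 1) / 2) j * poch ((τ + m) / 2) j *
        poch ((τ + m + 1) / 2) j /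
      (poch ((α + ν + τ + m) / 2) j * poch ((α + ν + τ + m + 1) / 2) j *
        poch ((m : ℝ) + ((d : ℝ) + 1) / 2) j * (Nat.factorial j : ℝ))

/-! ### Pochhammer symbols -/

lemma poch_pos {x : ℝ} (hx : 0 < x) (j : ℕ) : 0 < poch x j :=
  Finset.prod_pos fun i _ => by positivity

lemma poch_succ (x : ℝ) (j : ℕ) : poch x (j + 1) = poch x j * (x + j) :=
  Finset.prod_range_succ _ _

lemma poch_eq_Gamma {x : ℝ} (hx : 0 < x) (j : ℕ) :
    poch x j = Real.Gamma (x + j) / Real.Gamma x := by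
  have h := (Real.Gamma_pos_of_pos hx).ne'
  induction j with
  | zero => simp [poch, h]
  | succ j ih =>
    rw [poch_succ, ih, Nat.cast_succ, ← add_assoc, Real.Gamma_add_one (by positivity)]
    ring

/-- Duplication for rising factorials, `4 ^ j (x/2)_j ((x+1)/2)_j = (x)_{2j}`, in Gamma form. -/
lemma poch_half_mul_poch_half {x : ℝ} (hx : 0 < x) (j : ℕ) :
    poch (x / 2) j * poch ((x + 1) / 2) j =
      Real.Gamma (x + (2 * j : ℕ)) / (Real.Gamma x * 4 ^ j) := by
  have h := (Real.Gamma_pos_of_pos hx).ne'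
  induction j with
  | zero => simp [poch, h]
  | succ j ih =>
    have e : x + ((2 * (j + 1) : ℕ) : ℝ) = x + (2 * j : ℕ) + 1 + 1 := by push_cast; ring
    rw [e, Real.Gamma_add_one (by positivity), Real.Gamma_add_one (by positivity), poch_succ,
      poch_succ, mul_mul_mul_comm, ih]
    push_cast
    field_simp
    ring

lemma poch_eq_factorial_mul_choose (a : ℝ) (j : ℕ) :
    poch a j = (Nat.factorial j : ℝ) * Ring.choose (a + j - 1) j := by
  rw [← Ring.multichoose_eq, ← nsmul_eq_mul, Ring.factorial_nsmul_multichoose_eq_ascPochhammer,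
    Polynomial.ascPochhammer_smeval_eq_eval]
  induction j with
  | zero => simp [poch]
  | succ j ih => rw [poch_succ, ascPochhammer_succ_eval, ih]

/-! ### Gauss's summation theorem -/

/-- Binomial series for `(1 - x) ^ (-a)`. -/
lemma hasSum_one_sub_rpow (a : ℝ) {x : ℝ} (hx : x ∈ Set.Ioo (0 : ℝ) 1) :
    HasSum (fun j : ℕ => poch a j / (Nat.factorial j : ℝ) * x ^ j) ((1 - x) ^ (-a)) := by
  have h := (Real.one_div_one_sub_rpow_hasFPowerSeriesOnBall_zero a).hasSum
    (y := x) (by simpa [enorm_eq_nnnorm, ← NNReal.coe_lt_one, abs_of_pos hx.1] using hx.2)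
  rw [zero_add, one_div, ← Real.rpow_neg (by linarith [hx.2])] at h
  convert! h using 2 with j
  rw [poch_eq_factorial_mul_choose, mul_div_cancel_left₀ _ (by positivity)]
  simp [mul_comm]

open MeasureTheory ProbabilityTheory in
/-- Euler's Beta integral as a Lebesgue integral in `ℝ≥0∞`. -/
lemma lintegral_beta {a b : ℝ} (ha : 0 < a) (hb : 0 < b) :
    ∫⁻ x in Set.Ioo (0 : ℝ) 1, ENNReal.ofReal (x ^ (a - 1) * (1 - x) ^ (b - 1)) =
      ENNReal.ofReal (beta a b) := by
  have h := lintegral_betaPDF_eq_one ha hb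
  have hp := beta_pos ha hb
  rw [lintegral_betaPDF] at h
  simp_rw [mul_assoc, ENNReal.ofReal_mul (one_div_pos.2 hp).le] at h
  rw [lintegral_const_mul _ (by fun_prop)] at h
  have := congrArg (fun t => ENNReal.ofReal (beta a b) * t) h
  simpa only [← mul_assoc, ← ENNReal.ofReal_mul hp.le, mul_one_div_cancel hp.ne', mul_one,
    ENNReal.ofReal_one, one_mul] using this

open MeasureTheory ProbabilityTheory in
/-- Gauss's theorem before normalization: expand the factor `(1 - x) ^ (-a)` of the integrand
`x ^ (b - 1) * (1 - x) ^ (c - a - b - 1)` in its binomial series and integrate term by term. All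
terms are nonnegative, so working in `ℝ≥0∞` gives the interchange and the summability at once. -/
lemma hasSum_poch_mul_beta {a b c : ℝ} (ha : 0 < a) (hb : 0 < b) (hc : a + b < c) :
    HasSum (fun j : ℕ => poch a j / (Nat.factorial j : ℝ) * beta (b + j) (c - b))
      (beta b (c - a - b)) := by
  have hcb : 0 < c - b := by linarith
  have hcab : 0 < c - a - b := by linarith
  have hk : ∀ j : ℕ, 0 ≤ poch a j / (Nat.factorial j : ℝ) := fun j =>
    div_nonneg (poch_pos ha j).le (by positivity)
  have hB : ∀ j : ℕ, 0 < beta (b + j) (c - b) := fun j => beta_pos (by positivity) hcb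
  have key : ∑' j : ℕ, ENNReal.ofReal (poch a j / (Nat.factorial j : ℝ) * beta (b + j) (c - b)) =
      ENNReal.ofReal (beta b (c - a - b)) := by
    rw [← lintegral_beta hb hcab]
    simp_rw [fun j : ℕ => ENNReal.ofReal_mul (q := beta (b + j) (c - b)) (hk j)]
    have : ∀ j : ℕ, ENNReal.ofReal (poch a j / (Nat.factorial j : ℝ)) *
          ENNReal.ofReal (beta (b + j) (c - b)) =
        ∫⁻ x in Set.Ioo (0 : ℝ) 1, ENNReal.ofReal (poch a j / (Nat.factorial j : ℝ)) *
          ENNReal.ofReal (x ^ (b + j - 1) * (1 - x) ^ (c - b - 1)) := fun j => by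
      rw [lintegral_const_mul _ (by fun_prop), lintegral_beta (by positivity) hcb]
    simp_rw [this]
    rw [← lintegral_tsum (fun j => by fun_prop)]
    refine setLIntegral_congr_fun measurableSet_Ioo fun x hx => ?_
    have hx1 : 0 < 1 - x := by linarith [hx.2]
    have hs := (hasSum_one_sub_rpow a hx).mul_left (x ^ (b - 1) * (1 - x) ^ (c - b - 1))
    have e : x ^ (b - 1) * (1 - x) ^ (c - b - 1) * (1 - x) ^ (-a) =
        x ^ (b - 1) * (1 - x) ^ (c - a - b - 1) := by
      rw [mul_assoc, ← Real.rpow_add hx1]; ring_nf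
    rw [e] at hs
    rw [← hs.tsum_eq, ENNReal.ofReal_tsum_of_nonneg _ hs.summable]
    · refine tsum_congr fun j => ?_
      rw [← ENNReal.ofReal_mul (hk j), show b + (j : ℝ) - 1 = (b - 1) + j by ring,
        Real.rpow_add_natCast hx.1.ne']
      ring_nf
    · intro j
      have := hk j
      have := hx.1
      positivity
  have := ENNReal.hasSum_toReal (key ▸ ENNReal.ofReal_ne_top)
  rw [← ENNReal.tsum_toReal_eq (fun _ => ENNReal.ofReal_ne_top), key,
    ENNReal.toReal_ofReal (beta_pos hb hcab).le] at this
  convert! this using 2 with j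
  rw [ENNReal.toReal_ofReal (mul_nonneg (hk j) (hB j).le)]

/-- **Gauss's summation theorem** for `₂F₁(a, b; c; 1)`, for positive parameters. -/
lemma hasSum_gauss {a b c : ℝ} (ha : 0 < a) (hb : 0 < b) (hc : a + b < c) :
    HasSum (fun j : ℕ => poch a j * poch b j / (poch c j * (Nat.factorial j : ℝ)))
      (Real.Gamma c * Real.Gamma (c - a - b) / (Real.Gamma (c - a) * Real.Gamma (c - b))) := by
  have h := (hasSum_poch_mul_beta ha hb hc).mul_left
    (Real.Gamma c / (Real.Gamma b * Real.Gamma (c - b)))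
  have hc0 : 0 < c := by linarith
  have g1 := (Real.Gamma_pos_of_pos hb).ne'
  have g2 := (Real.Gamma_pos_of_pos hc0).ne'
  have g3 := (Real.Gamma_pos_of_pos (show 0 < c - b by linarith)).ne'
  have g4 := (Real.Gamma_pos_of_pos (show 0 < c - a by linarith)).ne'
  have hval : Real.Gamma c * Real.Gamma (c - a - b) / (Real.Gamma (c - a) * Real.Gamma (c - b)) =
      Real.Gamma c / (Real.Gamma b * Real.Gamma (c - b)) *
        ProbabilityTheory.beta b (c - a - b) := by
    rw [ProbabilityTheory.beta, show b + (c - a - b) = c - a by ring]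
    field_simp
  rw [hval]
  convert! h using 2 with j
  have g5 := (Real.Gamma_pos_of_pos (show 0 < c + j by positivity)).ne'
  rw [poch_eq_Gamma hb, poch_eq_Gamma hc0, ProbabilityTheory.beta,
    show b + j + (c - b) = c + j by ring]
  field_simp

/-! ### Gamma quotients -/

/-- `Γ(n + s) ~ Γ(n) n ^ s` for every real `s`. For `s > 0` this is Euler's limit formula for
`Γ(s)`; the functional equation carries it from `s + 1` to `s`, and so to negative `s`. -/
lemma tendsto_Gamma_ratio (s : ℝ) :
    Tendsto (fun n : ℕ => Real.Gamma (n + s) / (Real.Gamma n * (n : ℝ) ^ s)) atTop (nhds 1) := by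
  obtain ⟨k, hk⟩ := exists_nat_gt (-s)
  have hdiv : ∀ s : ℝ, Tendsto (fun n : ℕ => ((n : ℝ) + s) / n) atTop (nhds 1) := fun s => by
    have h : Tendsto (fun n : ℕ => 1 + s / (n : ℝ)) atTop (nhds (1 + 0)) :=
      tendsto_const_nhds.add (tendsto_const_div_atTop_nhds_zero_nat s)
    rw [add_zero] at h
    refine h.congr' ?_
    filter_upwards [eventually_gt_atTop 0] with n hn
    have : (n : ℝ) ≠ 0 := by positivity
    field_simp
  induction k generalizing s with
  | zero =>
    have hs : 0 < s := by simpa using hk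
    have g := (Real.Gamma_pos_of_pos hs).ne'
    have h1 := (tendsto_const_nhds (x := Real.Gamma s)).div (Real.GammaSeq_tendsto_Gamma s) g
    have h := h1.div (hdiv s) one_ne_zero
    rw [div_self g, div_one] at h
    refine h.congr' ?_
    filter_upwards [eventually_gt_atTop 0] with n hn
    have hn' : (0 : ℝ) < n := by positivity
    have e : ∏ j ∈ Finset.range (n + 1), (s + j) = Real.Gamma (s + (n + 1 : ℕ)) / Real.Gamma s :=
      poch_eq_Gamma hs (n + 1)
    have f : (Nat.factorial n : ℝ) = n * Real.Gamma n := by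
      rw [← Real.Gamma_nat_eq_factorial, Real.Gamma_add_one hn'.ne']
    have g2 := (Real.Gamma_pos_of_pos hn').ne'
    have g3 := (Real.rpow_pos_of_pos hn' s).ne'
    simp only [Pi.div_apply]
    rw [Real.GammaSeq, e, f, Nat.cast_succ, show s + ((n : ℝ) + 1) = n + s + 1 by ring,
      Real.Gamma_add_one (by positivity)]
    have : (n : ℝ) + s ≠ 0 := by positivity
    field_simp
  | succ k ih =>
    have h := (ih (s + 1) (by push_cast at hk; linarith)).div (hdiv s) one_ne_zero
    rw [div_one] at h
    refine h.congr' ?_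
    filter_upwards [eventually_gt_atTop 0, eventually_gt_atTop (k + 1)] with n hn hnk
    have hn' : (0 : ℝ) < n := by positivity
    have hnk' : ((k + 1 : ℕ) : ℝ) < n := by exact_mod_cast hnk
    have hp : 0 < (n : ℝ) + s := by linarith
    have g2 := (Real.Gamma_pos_of_pos hn').ne'
    have g3 := (Real.rpow_pos_of_pos hn' s).ne'
    simp only [Pi.div_apply]
    rw [← add_assoc, Real.Gamma_add_one hp.ne', Real.rpow_add_one hn'.ne']
    field_simp

/-! ### Comparison of the series -/

/-- Weights that tend to `1` do not change a sum of nonnegative terms asymptotically when the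
`m`-th sum only involves weights of index at least `m`. -/
lemma tendsto_weighted_tsum {w : ℕ → ℝ} (hw : Tendsto w atTop (nhds 1)) {v : ℕ → ℕ → ℝ}
    {V : ℕ → ℝ} (hv : ∀ᶠ m in atTop, (∀ j, 0 ≤ v m j) ∧ 0 < V m ∧ HasSum (v m) (V m)) :
    Tendsto (fun m => (∑' j, w (m + 2 * j) * v m j) / V m) atTop (nhds 1) := by
  rw [Metric.tendsto_atTop'] at hw
  refine Metric.tendsto_nhds.2 fun ε hε => ?_
  obtain ⟨M, hM⟩ := hw (ε / 2) (by positivity)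
  filter_upwards [hv, eventually_gt_atTop M] with m ⟨h0, hV, hs⟩ hm
  have hb : ∀ j, ‖(w (m + 2 * j) - 1) * v m j‖ ≤ ε / 2 * v m j := fun j => by
    rw [norm_mul, Real.norm_of_nonneg (h0 j)]
    exact mul_le_mul_of_nonneg_right (hM (m + 2 * j) (by omega)).le (h0 j)
  have hsum : Summable fun j => (w (m + 2 * j) - 1) * v m j :=
    .of_norm_bounded (hs.mul_left (ε / 2)).summable hb
  have e : ∑' j, w (m + 2 * j) * v m j = (∑' j, (w (m + 2 * j) - 1) * v m j) + V m := by
    rw [← hs.tsum_eq, ← hsum.tsum_add hs.summable]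
    exact tsum_congr fun j => by ring
  have hle := tsum_of_norm_bounded (hs.mul_left (ε / 2)) hb
  rw [Real.dist_eq, e, add_div, div_self hV.ne', add_sub_cancel_right, abs_div, abs_of_pos hV,
    div_lt_iff₀ hV]
  rw [Real.norm_eq_abs] at hle
  nlinarith

/-- The quotient `Γ(n+α) Γ(n+τ) / (Γ(n+α+ν+τ) Γ(n-ν))`; the shifts in the numerator and in the
denominator have the same sum. -/
noncomputable def gammaQuot (τ α ν : ℝ) (n : ℕ) : ℝ :=
  Real.Gamma (n + α) * Real.Gamma (n + τ) /
    (Real.Gamma (n + (α + ν + τ)) * Real.Gamma (n + -ν))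

lemma tendsto_gammaQuot (τ α ν : ℝ) : Tendsto (gammaQuot τ α ν) atTop (nhds 1) := by
  have h := ((tendsto_Gamma_ratio α).mul (tendsto_Gamma_ratio τ)).div
    ((tendsto_Gamma_ratio (α + ν + τ)).mul (tendsto_Gamma_ratio (-ν))) (by norm_num)
  simp only [mul_one, div_one] at h
  refine h.congr' ?_
  filter_upwards [eventually_gt_atTop 0] with n hn
  have hn' : (0 : ℝ) < n := by positivity
  have g := (Real.Gamma_pos_of_pos hn').ne'
  have p := fun s => (Real.rpow_pos_of_pos hn' s).ne'
  have e : (n : ℝ) ^ α * (n : ℝ) ^ τ = (n : ℝ) ^ (α + ν + τ) * (n : ℝ) ^ (-ν) := by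
    rw [← Real.rpow_add hn', ← Real.rpow_add hn']; ring_nf
  simp only [Pi.div_apply]
  rw [div_mul_div_comm, div_mul_div_comm, mul_mul_mul_comm _ _ _ ((n : ℝ) ^ τ), e,
    mul_mul_mul_comm _ _ _ ((n : ℝ) ^ (-ν)), div_div_div_cancel_right₀, gammaQuot]
  exact mul_ne_zero (mul_ne_zero g (p _)) (mul_ne_zero g (p _))

/-- The `j`-th term of the comparison series
`₂F₁((m-ν)/2, (m-ν+1)/2; m+(d+1)/2; 1)`. -/
noncomputable def gaussTerm (ν : ℝ) (d m j : ℕ) : ℝ :=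
  poch ((m - ν) / 2) j * poch ((m - ν + 1) / 2) j /
    (poch ((m : ℝ) + ((d : ℝ) + 1) / 2) j * (Nat.factorial j : ℝ))

/-- The sum of the comparison series `∑ j, gaussTerm ν d m j`, simplified by the duplication
formula. -/
noncomputable def gaussValue (ν : ℝ) (d m : ℕ) : ℝ :=
  Real.Gamma (m + ((d : ℝ) + 1) / 2) * Real.Gamma ((d : ℝ) / 2 + ν) * 2 ^ ((m : ℝ) + ν + d - 1) /
    (Real.Gamma (m + (ν + d)) * √π)

lemma hasSum_gaussTerm {ν : ℝ} (hν : 0 < ν) {d m : ℕ} (hm : ν < m) :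
    HasSum (gaussTerm ν d m) (gaussValue ν d m) := by
  have h := hasSum_gauss (a := (m - ν) / 2) (b := (m - ν + 1) / 2)
    (c := (m : ℝ) + ((d : ℝ) + 1) / 2) (by linarith) (by linarith)
    (by have : (0 : ℝ) ≤ d := d.cast_nonneg
        linarith)
  refine (show gaussValue ν d m = _ from ?_) ▸ h
  have hdup := Real.Gamma_mul_Gamma_add_half ((m + (ν + d)) / 2)
  have hp : (0 : ℝ) < m + (ν + d) := by positivity
  have g := (Real.Gamma_pos_of_pos hp).ne'
  have hpow : (2 : ℝ) ^ ((m : ℝ) + ν + d - 1) * 2 ^ (1 - ((m : ℝ) + (ν + d))) = 1 := by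
    rw [← Real.rpow_add two_pos]; ring_nf; simp
  rw [show 2 * (((m : ℝ) + (ν + d)) / 2) = m + (ν + d) by ring] at hdup
  rw [show (m : ℝ) + ((d : ℝ) + 1) / 2 - (m - ν) / 2 - (m - ν + 1) / 2 = d / 2 + ν by ring,
    show (m : ℝ) + ((d : ℝ) + 1) / 2 - (m - ν + 1) / 2 = (m + (ν + d)) / 2 by ring,
    show (m : ℝ) + ((d : ℝ) + 1) / 2 - (m - ν) / 2 = (m + (ν + d)) / 2 + 1 / 2 by ring,
    mul_comm (Real.Gamma (_ + 1 / 2)), hdup, gaussValue]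
  have hs : √π ≠ 0 := by positivity
  rw [div_eq_div_iff (by positivity) (by positivity)]
  linear_combination (Real.Gamma (m + ((d : ℝ) + 1) / 2) * Real.Gamma ((d : ℝ) / 2 + ν) *
    Real.Gamma (m + (ν + d)) * √π) * hpow

lemma gaussTerm_nonneg {ν : ℝ} {d m : ℕ} (hm : ν < m) (j : ℕ) : 0 ≤ gaussTerm ν d m j := by
  have h1 := poch_pos (show 0 < ((m : ℝ) - ν) / 2 by linarith) j
  have h2 := poch_pos (show 0 < ((m : ℝ) - ν + 1) / 2 by linarith) j
  have h3 := poch_pos (show 0 < (m : ℝ) + ((d : ℝ) + 1) / 2 by positivity) j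
  unfold gaussTerm
  positivity

lemma gaussValue_pos {ν : ℝ} (hν : 0 < ν) (d m : ℕ) : 0 < gaussValue ν d m := by
  have h1 := Real.Gamma_pos_of_pos (show 0 < (m : ℝ) + ((d : ℝ) + 1) / 2 by positivity)
  have h2 := Real.Gamma_pos_of_pos (show 0 < (d : ℝ) / 2 + ν by positivity)
  have h3 := Real.Gamma_pos_of_pos (show 0 < (m : ℝ) + (ν + d) by positivity)
  unfold gaussValue
  positivity

/-- The terms of `Smd` and of the comparison series have the ratio
`gammaQuot (m + 2 * j) / gammaQuot m`. -/
lemma Smd_eq {τ α ν : ℝ} (hτ : 0 < τ) (hα : 0 < α) (hν : 0 < ν) {d m : ℕ} (hm : ν < m) :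
    Smd τ α ν d m =
      (∑' j, gammaQuot τ α ν (m + 2 * j) * gaussTerm ν d m j) / gammaQuot τ α ν m := by
  rw [Smd, ← tsum_div_const]
  refine tsum_congr fun j => ?_
  have h1 := (Real.Gamma_pos_of_pos (show 0 < (m : ℝ) + α by positivity)).ne'
  have h2 := (Real.Gamma_pos_of_pos (show 0 < (m : ℝ) + τ by positivity)).ne'
  have h3 := (Real.Gamma_pos_of_pos (show 0 < (m : ℝ) + (α + ν + τ) by positivity)).ne'
  have h4 := (Real.Gamma_pos_of_pos (show 0 < (m : ℝ) + -ν by linarith)).ne'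
  have h5 := (Real.Gamma_pos_of_pos
    (show 0 < (m : ℝ) + -ν + (2 * j : ℕ) by
      have : (0 : ℝ) ≤ (2 * j : ℕ) := Nat.cast_nonneg _
      linarith)).ne'
  have h6 := (Real.Gamma_pos_of_pos
    (show 0 < (m : ℝ) + (α + ν + τ) + (2 * j : ℕ) by positivity)).ne'
  have h7 := (poch_pos (show 0 < (m : ℝ) + ((d : ℝ) + 1) / 2 by positivity) j).ne'
  rw [mul_assoc (poch _ j * poch _ j), gaussTerm, gammaQuot, gammaQuot, add_comm α (m : ℝ),
    add_comm τ (m : ℝ), add_comm (α + ν + τ) (m : ℝ), sub_eq_add_neg (m : ℝ) ν,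
    poch_half_mul_poch_half (by positivity), poch_half_mul_poch_half (by positivity),
    poch_half_mul_poch_half (by positivity), poch_half_mul_poch_half (by linarith),
    Nat.cast_add, add_right_comm (m : ℝ) _ α, add_right_comm (m : ℝ) _ τ,
    add_right_comm (m : ℝ) _ (α + ν + τ), add_right_comm (m : ℝ) _ (-ν)]
  field_simp

/-! ### Asymptotics -/

lemma tendsto_gaussValue_ratio {ν : ℝ} (hν : 0 < ν) (d : ℕ) :
    Tendsto (fun m : ℕ => gaussValue ν d m /
      (Real.Gamma ((d : ℝ) / 2 + ν) / (2 * √π) *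
        ((2 : ℝ) ^ ((m : ℝ) + d + ν) / (m : ℝ) ^ (((d : ℝ) - 1) / 2 + ν)))) atTop (nhds 1) := by
  have h := (tendsto_Gamma_ratio (((d : ℝ) + 1) / 2)).div (tendsto_Gamma_ratio (ν + d)) one_ne_zero
  rw [div_one] at h
  refine h.congr' ?_
  filter_upwards [eventually_gt_atTop 0] with m hm
  have hm' : (0 : ℝ) < m := by positivity
  have g := (Real.Gamma_pos_of_pos hm').ne'
  have g1 := (Real.Gamma_pos_of_pos (show 0 < (d : ℝ) / 2 + ν by positivity)).ne'
  have g2 := (Real.Gamma_pos_of_pos (show 0 < (m : ℝ) + (ν + d) by positivity)).ne'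
  have hs : √π ≠ 0 := by positivity
  have e1 : (2 : ℝ) ^ ((m : ℝ) + d + ν) = 2 ^ ((m : ℝ) + ν + d - 1) * 2 := by
    rw [← Real.rpow_add_one two_ne_zero]; ring_nf
  have e2 : (m : ℝ) ^ (ν + d) =
      (m : ℝ) ^ (((d : ℝ) - 1) / 2 + ν) * (m : ℝ) ^ (((d : ℝ) + 1) / 2) := by
    rw [← Real.rpow_add hm']; ring_nf
  have p := fun s => (Real.rpow_pos_of_pos hm' s).ne'
  have p1 := p (((d : ℝ) - 1) / 2 + ν)
  have p2 := p (((d : ℝ) + 1) / 2)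
  have p3 := (Real.rpow_pos_of_pos two_pos ((m : ℝ) + ν + d - 1)).ne'
  simp only [Pi.div_apply]
  rw [gaussValue, e1, e2]
  generalize (m : ℝ) ^ (((d : ℝ) - 1) / 2 + ν) = A at *
  generalize (m : ℝ) ^ (((d : ℝ) + 1) / 2) = B at *
  generalize (2 : ℝ) ^ ((m : ℝ) + ν + d - 1) = C at *
  field_simp

theorem stmt14 (τ α ν : ℝ) (hτ : 0 < τ) (hα : 0 < α) (hν : 0 < ν)
    (d : ℕ) (hd : 1 ≤ d) :
    Tendsto (fun m : ℕ =>
        Smd τ α ν d m /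
          (Real.Gamma ((d : ℝ) / 2 + ν) / (2 * Real.sqrt π) *
            ((2 : ℝ) ^ ((m : ℝ) + d + ν) / (m : ℝ) ^ (((d : ℝ) - 1) / 2 + ν))))
      atTop (nhds 1) := by
  have hlarge : ∀ᶠ m : ℕ in atTop, ν < m :=
    tendsto_natCast_atTop_atTop.eventually (eventually_gt_atTop ν)
  have hR := tendsto_gammaQuot τ α ν
  have h1 := tendsto_weighted_tsum hR (v := gaussTerm ν d) (V := gaussValue ν d)
    (hlarge.mono fun m hm => ⟨gaussTerm_nonneg hm, gaussValue_pos hν d m, hasSum_gaussTerm hν hm⟩)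
  have h := (h1.div hR one_ne_zero).mul (tendsto_gaussValue_ratio hν d)
  rw [div_one, mul_one] at h
  refine h.congr' ?_
  filter_upwards [hlarge] with m hm
  have hV := (gaussValue_pos hν d m).ne'
  simp only [Pi.div_apply]
  rw [Smd_eq hτ hα hν hm, ← mul_div_assoc]
  congr 1
  field_simp
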